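/- arXiv:1812.08276 — 2 statements merged into one kernel-verified Lean document; each statement's English description precedes it below -/
import Mathlib

section
/- Let T be an almost k-regular tree (k ≥ 2): deg(v) ≤ k for every vertex v and deg(v) = k for all but finitely many vertices v. Let 1 < p < ∞ and q = p/(p−1). Then the operator norm of the shift operator S on ℓ^p(T) equals (k−1)^{1/p} + (k−1)^{1/q}. -/
/-- The shift (adjacency) operator: `(Sf)(u) = ∑_{v ~ u} f(v)`. -/
noncomputable def shiftOp {V : Type*} (G : SimpleGraph V) (f : V → ℂ) (u : V) : ℂ :=
  ∑ᶠ v ∈ G.neighborSet u, f v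

/-- The degree of a vertex. -/
noncomputable def gdeg {V : Type*} (G : SimpleGraph V) (v : V) : ℕ :=
  (G.neighborSet v).ncard

/-- Membership in ℓ^p: `∑_{v} |f(v)|^p < ∞`. -/
def memlp {V : Type*} (f : V → ℂ) (p : ℝ) : Prop :=
  Summable fun v => ‖f v‖ ^ p

/-- The ℓ^p norm: `(∑_{v} |f(v)|^p)^{1/p}`. -/
noncomputable def lpnorm {V : Type*} (f : V → ℂ) (p : ℝ) : ℝ :=
  (∑' v, ‖f v‖ ^ p) ^ (1 / p)

/-!
Root every component of a forest with degrees at most `k = d + 1`, let `h v` be the height of `v`,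
and put `t = d ^ (-1/p)`. The radial functions `v ↦ t ^ h v` and `v ↦ (t ^ (p - 1)) ^ h v` satisfy
`S w ≤ N w` with `N = t⁻¹ + d t = d ^ (1/p) + d ^ (1 - 1/p)`, so the Schur test bounds `S` by `N`
on `ℓ^p`. Conversely, only finitely many vertices lie above a vertex of degree different from `k`,
so some vertex spans a full `d`-ary subtree. On that subtree `t ^ h v` has the same `ℓ^p` mass in
every generation and is an eigenfunction with eigenvalue `N` away from the root; truncating it to
`M + 2` generations loses only the two extreme ones, so `N ^ p * M ≤ C ^ p * (M + 2)` for every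
admissible constant `C`.
-/

open Filter Finset
open scoped Topology

section LpNorm

variable {V : Type*} {p : ℝ}

theorem lpnorm_nonneg (f : V → ℂ) (p : ℝ) : 0 ≤ lpnorm f p :=
  Real.rpow_nonneg (tsum_nonneg fun _ ↦ by positivity) _

theorem lpnorm_rpow (hp : 0 < p) (f : V → ℂ) : lpnorm f p ^ p = ∑' v, ‖f v‖ ^ p := by
  have hsum : 0 ≤ ∑' v, ‖f v‖ ^ p := tsum_nonneg fun _ ↦ by positivity
  rw [lpnorm, ← Real.rpow_mul hsum, one_div_mul_cancel hp.ne', Real.rpow_one]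

theorem lpnorm_le_mul_lpnorm_iff (hp : 0 < p) {C : ℝ} (hC : 0 ≤ C) (f g : V → ℂ) :
    lpnorm g p ≤ C * lpnorm f p ↔ ∑' v, ‖g v‖ ^ p ≤ C ^ p * ∑' v, ‖f v‖ ^ p := by
  rw [← Real.rpow_le_rpow_iff (lpnorm_nonneg g p) (mul_nonneg hC (lpnorm_nonneg f p)) hp,
    Real.mul_rpow hC (lpnorm_nonneg f p), lpnorm_rpow hp, lpnorm_rpow hp]

end LpNorm

section Shift

variable {V : Type*} (G : SimpleGraph V)

theorem gdeg_eq_degree [G.LocallyFinite] (v : V) : gdeg G v = G.degree v := by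
  rw [gdeg, Set.ncard_eq_toFinset_card', ← SimpleGraph.neighborFinset_def,
    SimpleGraph.card_neighborFinset_eq_degree]

theorem shiftOp_eq_sum [G.LocallyFinite] (f : V → ℂ) (v : V) :
    shiftOp G f v = ∑ u ∈ G.neighborFinset v, f u := by
  rw [shiftOp, ← SimpleGraph.coe_neighborFinset, finsum_mem_coe_finset]

/-- `C` is a bound for the shift operator of `G` on `ℓ^p`; the least such `C` is its operator
norm. -/
def IsShiftBound (p C : ℝ) : Prop :=
  0 ≤ C ∧ ∀ f : V → ℂ, memlp f p →
    memlp (shiftOp G f) p ∧ lpnorm (shiftOp G f) p ≤ C * lpnorm f p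

end Shift

section Schur

theorem rpow_sum_le_weight_mul_sum {ι : Type*} (s : Finset ι) {p : ℝ} (hp : 1 ≤ p) {w a : ι → ℝ}
    (hw : ∀ i, 0 < w i) (ha : ∀ i, 0 ≤ a i) :
    (∑ i ∈ s, a i) ^ p ≤ (∑ i ∈ s, w i) ^ (p - 1) * ∑ i ∈ s, w i ^ (1 - p) * a i ^ p := by
  have hp0 : 0 < p := by linarith
  have hW : 0 ≤ ∑ i ∈ s, w i := sum_nonneg fun i _ ↦ (hw i).le
  have hterm (i : ι) : w i * (a i / w i) ^ p = w i ^ (1 - p) * a i ^ p := by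
    rw [Real.div_rpow (ha i) (hw i).le, Real.rpow_sub (hw i), Real.rpow_one]
    ring
  have hS : 0 ≤ ∑ i ∈ s, w i ^ (1 - p) * a i ^ p :=
    sum_nonneg fun i _ ↦ mul_nonneg (Real.rpow_nonneg (hw i).le _) (Real.rpow_nonneg (ha i) _)
  have hHolder : ∑ i ∈ s, a i ≤
      (∑ i ∈ s, w i) ^ (1 - p⁻¹) * (∑ i ∈ s, w i ^ (1 - p) * a i ^ p) ^ p⁻¹ := by
    have := Real.inner_le_weight_mul_Lp_of_nonneg s hp w (fun i ↦ a i / w i)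
      (fun i ↦ (hw i).le) (fun i ↦ div_nonneg (ha i) (hw i).le)
    simpa only [hterm, mul_div_cancel₀ _ (hw _).ne'] using this
  calc (∑ i ∈ s, a i) ^ p
      ≤ ((∑ i ∈ s, w i) ^ (1 - p⁻¹) * (∑ i ∈ s, w i ^ (1 - p) * a i ^ p) ^ p⁻¹) ^ p :=
        Real.rpow_le_rpow (sum_nonneg fun i _ ↦ ha i) hHolder hp0.le
    _ = (∑ i ∈ s, w i) ^ (p - 1) * ∑ i ∈ s, w i ^ (1 - p) * a i ^ p := by
        rw [Real.mul_rpow (Real.rpow_nonneg hW _) (Real.rpow_nonneg hS _), ← Real.rpow_mul hW,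
          Real.rpow_inv_rpow hS hp0.ne', sub_mul, one_mul, inv_mul_cancel₀ hp0.ne']

variable {V : Type*} {G : SimpleGraph V} [G.LocallyFinite] {p A B : ℝ} {w : V → ℝ}

theorem norm_shiftOp_rpow_le (hp : 1 ≤ p) (hw : ∀ v, 0 < w v) (hA : 0 ≤ A)
    (hwA : ∀ v, ∑ u ∈ G.neighborFinset v, w u ≤ A * w v) (f : V → ℂ) (v : V) :
    ‖shiftOp G f v‖ ^ p ≤
      A ^ (p - 1) * ∑ u ∈ G.neighborFinset v, w v ^ (p - 1) * (w u ^ (1 - p) * ‖f u‖ ^ p) := by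
  have hnonneg (u : V) : 0 ≤ w u ^ (1 - p) * ‖f u‖ ^ p :=
    mul_nonneg (Real.rpow_nonneg (hw u).le _) (by positivity)
  calc ‖shiftOp G f v‖ ^ p ≤ (∑ u ∈ G.neighborFinset v, ‖f u‖) ^ p := by
        rw [shiftOp_eq_sum]
        exact Real.rpow_le_rpow (norm_nonneg _) (norm_sum_le _ _) (by linarith)
    _ ≤ (∑ u ∈ G.neighborFinset v, w u) ^ (p - 1) *
          ∑ u ∈ G.neighborFinset v, w u ^ (1 - p) * ‖f u‖ ^ p :=
        rpow_sum_le_weight_mul_sum _ hp hw fun u ↦ norm_nonneg (f u)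
    _ ≤ (A * w v) ^ (p - 1) * ∑ u ∈ G.neighborFinset v, w u ^ (1 - p) * ‖f u‖ ^ p :=
        mul_le_mul_of_nonneg_right
          (Real.rpow_le_rpow (sum_nonneg fun u _ ↦ (hw u).le) (hwA v) (by linarith))
          (sum_nonneg fun u _ ↦ hnonneg u)
    _ = _ := by rw [Real.mul_rpow hA (hw v).le, mul_assoc, mul_sum]

theorem sum_norm_shiftOp_rpow_le (hp : 1 ≤ p) (hw : ∀ v, 0 < w v) (hA : 0 ≤ A) (hB : 0 ≤ B)
    (hwA : ∀ v, ∑ u ∈ G.neighborFinset v, w u ≤ A * w v)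
    (hwB : ∀ v, ∑ u ∈ G.neighborFinset v, w u ^ (p - 1) ≤ B * w v ^ (p - 1))
    {f : V → ℂ} (hf : memlp f p) (W : Finset V) :
    ∑ v ∈ W, ‖shiftOp G f v‖ ^ p ≤ A ^ (p - 1) * (B * ∑' v, ‖f v‖ ^ p) := by
  classical
  have hwpos (r : ℝ) (u : V) : 0 < w u ^ r := Real.rpow_pos_of_pos (hw u) r
  have hnonneg (u : V) : 0 ≤ w u ^ (1 - p) * ‖f u‖ ^ p :=
    mul_nonneg (hwpos _ u).le (by positivity)
  have hcolumn (u : V) : ∑ v ∈ G.neighborFinset u with v ∈ W,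
      w v ^ (p - 1) * (w u ^ (1 - p) * ‖f u‖ ^ p) ≤ B * ‖f u‖ ^ p :=
    calc _ ≤ ∑ v ∈ G.neighborFinset u, w v ^ (p - 1) * (w u ^ (1 - p) * ‖f u‖ ^ p) :=
          sum_le_sum_of_subset_of_nonneg (filter_subset _ _)
            fun v _ _ ↦ mul_nonneg (hwpos _ v).le (hnonneg u)
      _ ≤ B * w u ^ (p - 1) * (w u ^ (1 - p) * ‖f u‖ ^ p) := by
          rw [← sum_mul]
          exact mul_le_mul_of_nonneg_right (hwB u) (hnonneg u)
      _ = B * (w u ^ (p - 1) * w u ^ (1 - p)) * ‖f u‖ ^ p := by ring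
      _ = B * ‖f u‖ ^ p := by
          rw [← Real.rpow_add (hw u), sub_add_sub_cancel, sub_self, Real.rpow_zero, mul_one]
  calc ∑ v ∈ W, ‖shiftOp G f v‖ ^ p
      ≤ ∑ v ∈ W, A ^ (p - 1) *
          ∑ u ∈ G.neighborFinset v, w v ^ (p - 1) * (w u ^ (1 - p) * ‖f u‖ ^ p) :=
        sum_le_sum fun v _ ↦ norm_shiftOp_rpow_le hp hw hA hwA f v
    _ = A ^ (p - 1) * ∑ u ∈ W.biUnion (G.neighborFinset ·), ∑ v ∈ G.neighborFinset u with v ∈ W,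
          w v ^ (p - 1) * (w u ^ (1 - p) * ‖f u‖ ^ p) := by
        rw [← mul_sum, sum_comm' fun v u ↦ ?_]
        simp only [mem_filter, mem_biUnion, SimpleGraph.mem_neighborFinset, G.adj_comm u v]
        tauto
    _ ≤ A ^ (p - 1) * ∑ u ∈ W.biUnion (G.neighborFinset ·), B * ‖f u‖ ^ p := by
        gcongr with u
        exact hcolumn u
    _ ≤ A ^ (p - 1) * (B * ∑' v, ‖f v‖ ^ p) := by
        rw [← mul_sum]
        gcongr
        exact hf.sum_le_tsum _ fun _ _ ↦ by positivity

theorem isShiftBound_of_schur (hp : 1 ≤ p) (hw : ∀ v, 0 < w v) (hA : 0 ≤ A) (hB : 0 ≤ B)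
    (hwA : ∀ v, ∑ u ∈ G.neighborFinset v, w u ≤ A * w v)
    (hwB : ∀ v, ∑ u ∈ G.neighborFinset v, w u ^ (p - 1) ≤ B * w v ^ (p - 1)) :
    IsShiftBound G p (A ^ (1 - 1 / p) * B ^ (1 / p)) := by
  have hp0 : 0 < p := by linarith
  have hC : 0 ≤ A ^ (1 - 1 / p) * B ^ (1 / p) := by positivity
  refine ⟨hC, fun f hf ↦ ?_⟩
  have hfinite := sum_norm_shiftOp_rpow_le hp hw hA hB hwA hwB hf
  refine ⟨summable_of_sum_le (fun _ ↦ by positivity) hfinite, ?_⟩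
  rw [lpnorm_le_mul_lpnorm_iff hp0 hC, Real.mul_rpow (by positivity) (by positivity),
    ← Real.rpow_mul hA, ← Real.rpow_mul hB, one_div_mul_cancel hp0.ne', Real.rpow_one,
    sub_mul, one_mul, one_div_mul_cancel hp0.ne', mul_assoc]
  exact Real.tsum_le_of_sum_le (fun _ ↦ by positivity) hfinite

end Schur

section Height

/-- `h` is the height function of a rooting of the forest `G`: it changes by one along each edge,
and a vertex has at most one neighbour of smaller height, its parent. -/
structure IsForestHeight {V : Type*} (G : SimpleGraph V) (h : V → ℕ) : Prop where
  eq_add_one_or_eq_add_one {u v : V} : G.Adj u v → h u = h v + 1 ∨ h v = h u + 1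
  parent_unique {u v w : V} : G.Adj u v → G.Adj u w → h u = h v + 1 → h u = h w + 1 → v = w

variable {V : Type*} {G : SimpleGraph V}

theorem eq_of_adj_of_dist_eq_add_one (hG : G.IsAcyclic) {o u v w : V} (ho : G.Reachable o u)
    (huv : G.Adj u v) (huw : G.Adj u w) (hv : G.dist o u = G.dist o v + 1)
    (hw : G.dist o u = G.dist o w + 1) : v = w := by
  have hgeodesic {x : V} (hux : G.Adj u x) (hx : G.dist o u = G.dist o x + 1) :
      ∃ P : G.Walk o u, P.IsPath ∧ P.penultimate = x := by
    obtain ⟨P, -, hP⟩ := (ho.trans hux.reachable).exists_path_of_dist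
    exact ⟨P.concat hux.symm, SimpleGraph.Walk.isPath_of_length_eq_dist _ (by simp [hP, hx]),
      P.penultimate_concat hux.symm⟩
  obtain ⟨P, hP, rfl⟩ := hgeodesic huv hv
  obtain ⟨Q, hQ, rfl⟩ := hgeodesic huw hw
  exact congrArg (fun R : G.Path o u ↦ R.1.penultimate)
    ((hG.subsingleton_path o u).elim ⟨P, hP⟩ ⟨Q, hQ⟩)

theorem exists_isForestHeight (hG : G.IsAcyclic) : ∃ h : V → ℕ, IsForestHeight G h := by
  let root (v : V) : V := (G.connectedComponentMk v).out
  have hroot (v : V) : G.Reachable (root v) v :=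
    SimpleGraph.ConnectedComponent.exact (G.connectedComponentMk v).out_eq
  have hroot_eq {u v : V} (huv : G.Adj u v) : root v = root u := by
    simp only [root, SimpleGraph.ConnectedComponent.connectedComponentMk_eq_of_adj huv]
  refine ⟨fun v ↦ G.dist (root v) v, fun {u v} huv ↦ ?_, fun {u v w} huv huw hv hw ↦ ?_⟩
  · rw [hroot_eq huv]
    exact hG.dist_eq_dist_add_one_of_adj_of_reachable _ huv (hroot u)
  · rw [hroot_eq huv] at hv
    rw [hroot_eq huw] at hw
    exact eq_of_adj_of_dist_eq_add_one hG (hroot u) huv huw hv hw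

variable [G.LocallyFinite] {h : V → ℕ}

variable (G h) in
/-- The neighbours of `v` one level below `v`: its parent, or nothing if `v` is a root. -/
def parents (v : V) : Finset V := {u ∈ G.neighborFinset v | h v = h u + 1}

variable (G h) in
/-- The neighbours of `v` one level above `v`. -/
def children (v : V) : Finset V := {u ∈ G.neighborFinset v | h u = h v + 1}

theorem mem_parents {u v : V} : u ∈ parents G h v ↔ G.Adj v u ∧ h v = h u + 1 := by
  simp [parents]

theorem mem_children {u v : V} : u ∈ children G h v ↔ G.Adj v u ∧ h u = h v + 1 := by
  simp [children]

theorem mem_parents_iff_mem_children {u v : V} : u ∈ parents G h v ↔ v ∈ children G h u := by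
  rw [mem_parents, mem_children, G.adj_comm]

namespace IsForestHeight

theorem card_parents_le_one (hh : IsForestHeight G h) (v : V) : #(parents G h v) ≤ 1 := by
  refine card_le_one.2 fun u hu w hw ↦ ?_
  rw [mem_parents] at hu hw
  exact hh.parent_unique hu.1 hw.1 hu.2 hw.2

theorem parents_eq_singleton (hh : IsForestHeight G h) {u v : V} (huv : v ∈ children G h u) :
    parents G h v = {u} :=
  have hu : u ∈ parents G h v := mem_parents_iff_mem_children.2 huv
  eq_singleton_iff_unique_mem.2
    ⟨hu, fun w hw ↦ card_le_one.1 (hh.card_parents_le_one v) w hw u hu⟩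

theorem pairwiseDisjoint_children (hh : IsForestHeight G h) (s : Set V) :
    s.PairwiseDisjoint (children G h) := by
  refine fun u _ v _ huv ↦ disjoint_left.2 fun w hu hv ↦ huv ?_
  exact singleton_injective ((hh.parents_eq_singleton hu).symm.trans (hh.parents_eq_singleton hv))

theorem sum_neighborFinset (hh : IsForestHeight G h) {M : Type*} [AddCommMonoid M] (g : V → M)
    (v : V) : ∑ u ∈ G.neighborFinset v, g u =
      ∑ u ∈ parents G h v, g u + ∑ u ∈ children G h v, g u := by
  have hchildren : children G h v = {u ∈ G.neighborFinset v | ¬ h v = h u + 1} := by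
    refine filter_congr fun u hu ↦ ?_
    have := hh.eq_add_one_or_eq_add_one ((G.mem_neighborFinset v u).1 hu)
    lia
  rw [hchildren, parents, sum_filter_add_sum_filter_not]

theorem degree_eq (hh : IsForestHeight G h) (v : V) :
    G.degree v = #(parents G h v) + #(children G h v) := by
  rw [← SimpleGraph.card_neighborFinset_eq_degree, card_eq_sum_ones, hh.sum_neighborFinset,
    ← card_eq_sum_ones, ← card_eq_sum_ones]

theorem sum_neighborFinset_pow (hh : IsForestHeight G h) {K : Type*} [Field K] {t : K}
    (ht : t ≠ 0) (v : V) :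
    ∑ u ∈ G.neighborFinset v, t ^ h u =
      (#(parents G h v) * t⁻¹ + #(children G h v) * t) * t ^ h v := by
  have hparents : ∀ u ∈ parents G h v, t ^ h u = t⁻¹ * t ^ h v := fun u hu ↦ by
    rw [(mem_parents.1 hu).2, pow_succ', inv_mul_cancel_left₀ ht]
  have hchildren : ∀ u ∈ children G h v, t ^ h u = t * t ^ h v := fun u hu ↦ by
    rw [(mem_children.1 hu).2, pow_succ']
  rw [hh.sum_neighborFinset, sum_congr rfl hparents, sum_congr rfl hchildren]
  simp only [sum_const, nsmul_eq_mul]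
  ring

theorem sum_neighborFinset_pow_le (hh : IsForestHeight G h) {t d : ℝ} (ht0 : 0 < t) (ht1 : t ≤ 1)
    {v : V} (hd : G.degree v ≤ d + 1) :
    ∑ u ∈ G.neighborFinset v, t ^ h u ≤ (t⁻¹ + d * t) * t ^ h v := by
  rw [hh.sum_neighborFinset_pow ht0.ne']
  refine mul_le_mul_of_nonneg_right ?_ (by positivity)
  have hparents : (#(parents G h v) : ℝ) ≤ 1 := mod_cast hh.card_parents_le_one v
  have hdegree : (#(parents G h v) + #(children G h v) : ℝ) ≤ d + 1 := by
    rwa [hh.degree_eq, Nat.cast_add] at hd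
  have ht : t ≤ t⁻¹ := ht1.trans ((one_le_inv₀ ht0).2 ht1)
  nlinarith

end IsForestHeight

end Height

section RadialRatio

/-- The value `d ^ (1 / p) + d ^ (1 - 1 / p)` of the norm of the shift on `ℓ^p` of a
`(d + 1)`-regular tree. -/
noncomputable def shiftNorm (d p : ℝ) : ℝ := d ^ (1 / p) + d ^ (1 - 1 / p)

/-- The ratio `t` for which the radial function `v ↦ t ^ h v` has the same `ℓ^p` mass in every
generation of a `d`-ary tree. -/
noncomputable def radialRatio (d p : ℝ) : ℝ := d ^ (-(1 / p))

variable {d p : ℝ}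

theorem shiftNorm_pos (hd : 0 < d) : 0 < shiftNorm d p := by
  unfold shiftNorm
  positivity

theorem radialRatio_pos (hd : 0 < d) : 0 < radialRatio d p :=
  Real.rpow_pos_of_pos hd _

theorem radialRatio_le_one (hd : 1 ≤ d) (hp : 0 ≤ p) : radialRatio d p ≤ 1 :=
  Real.rpow_le_one_of_one_le_of_nonpos hd (by rw [neg_nonpos]; positivity)

theorem radialRatio_rpow (hd : 0 ≤ d) (hp : p ≠ 0) : radialRatio d p ^ p = d⁻¹ := by
  rw [radialRatio, ← Real.rpow_mul hd, neg_mul, one_div_mul_cancel hp, Real.rpow_neg_one]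

theorem inv_add_mul_radialRatio (hd : 0 < d) :
    (radialRatio d p)⁻¹ + d * radialRatio d p = shiftNorm d p := by
  rw [radialRatio, shiftNorm, ← Real.rpow_neg hd.le, neg_neg, sub_eq_add_neg,
    Real.rpow_add hd, Real.rpow_one]

/-- Passing to the conjugate exponent exchanges the two terms of `shiftNorm`. -/
theorem inv_add_mul_radialRatio_rpow (hd : 0 < d) (hp : p ≠ 0) :
    (radialRatio d p ^ (p - 1))⁻¹ + d * radialRatio d p ^ (p - 1) = shiftNorm d p := by
  have hconj : radialRatio d p ^ (p - 1) = (d * radialRatio d p)⁻¹ := by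
    rw [Real.rpow_sub_one (radialRatio_pos hd).ne', radialRatio_rpow hd.le hp, mul_inv,
      div_eq_mul_inv]
  rw [hconj, inv_inv, mul_inv, mul_inv_cancel_left₀ hd.ne', add_comm, inv_add_mul_radialRatio hd]

end RadialRatio

theorem isShiftBound_shiftNorm {V : Type*} {G : SimpleGraph V} [G.LocallyFinite]
    (hG : G.IsAcyclic) {d p : ℝ} (hd : 1 ≤ d) (hdeg : ∀ v, G.degree v ≤ d + 1) (hp : 1 ≤ p) :
    IsShiftBound G p (shiftNorm d p) := by
  obtain ⟨h, hh⟩ := exists_isForestHeight hG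
  have hd0 : 0 < d := by linarith
  have hp0 : p ≠ 0 := by linarith
  have hN : 0 < shiftNorm d p := shiftNorm_pos hd0
  set t := radialRatio d p
  have ht0 : 0 < t := radialRatio_pos hd0
  have ht1 : t ≤ 1 := radialRatio_le_one hd (by linarith)
  have hpow (v : V) : (t ^ h v) ^ (p - 1) = (t ^ (p - 1)) ^ h v := by
    rw [← Real.rpow_natCast_mul ht0.le, ← Real.rpow_mul_natCast ht0.le, mul_comm]
  have hschur := isShiftBound_of_schur (G := G) (w := fun v ↦ t ^ h v) hp
    (fun v ↦ pow_pos ht0 _) hN.le hN.le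
    (fun v ↦ by
      rw [← inv_add_mul_radialRatio hd0]
      exact hh.sum_neighborFinset_pow_le ht0 ht1 (hdeg v))
    (fun v ↦ by
      simp only [hpow]
      rw [← inv_add_mul_radialRatio_rpow hd0 hp0]
      exact hh.sum_neighborFinset_pow_le (Real.rpow_pos_of_pos ht0 _)
        (Real.rpow_le_one ht0.le ht1 (by linarith)) (hdeg v))
  rwa [← Real.rpow_add hN, sub_add_cancel, Real.rpow_one] at hschur

section Generation

variable {V : Type*} [DecidableEq V] {G : SimpleGraph V} [G.LocallyFinite] {h : V → ℕ}

variable (G h) in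
/-- The `n`-th generation of descendants of `x`. -/
def generation (x : V) : ℕ → Finset V
  | 0 => {x}
  | n + 1 => (generation x n).biUnion (children G h)

theorem mem_generation_succ {x v : V} {n : ℕ} :
    v ∈ generation G h x (n + 1) ↔ ∃ u ∈ generation G h x n, v ∈ children G h u := by
  rw [generation, mem_biUnion]

theorem height_of_mem_generation {x v : V} {n : ℕ} (hv : v ∈ generation G h x n) :
    h v = h x + n := by
  induction n generalizing v with
  | zero => rw [mem_singleton.1 hv, add_zero]
  | succ n ih =>
    obtain ⟨u, hu, huv⟩ := mem_generation_succ.1 hv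
    rw [(mem_children.1 huv).2, ih hu, add_assoc]

theorem generation_subset_generation_succ {x z : V} (hx : x ∈ children G h z) (n : ℕ) :
    generation G h x n ⊆ generation G h z (n + 1) := by
  induction n with
  | zero => simpa [generation] using hx
  | succ n ih => exact biUnion_subset_biUnion_of_subset_left _ ih

theorem disjoint_generation (x : V) {m n : ℕ} (hmn : m ≠ n) :
    Disjoint (generation G h x m) (generation G h x n) := by
  refine disjoint_left.2 fun v hm hn ↦ hmn ?_
  have := height_of_mem_generation hm
  have := height_of_mem_generation hn
  lia

theorem finite_setOf_mem_generation (e : V) (n : ℕ) : {x | e ∈ generation G h x n}.Finite := by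
  induction n generalizing e with
  | zero => exact (Set.finite_singleton e).subset fun x hx ↦ (mem_singleton.1 hx).symm
  | succ n ih =>
    refine ((parents G h e).finite_toSet.biUnion fun u _ ↦ ih u).subset fun x hx ↦ ?_
    obtain ⟨u, hu, hue⟩ := mem_generation_succ.1 hx
    exact Set.mem_biUnion (mem_coe.2 (mem_parents_iff_mem_children.2 hue)) hu

theorem finite_setOf_exists_mem_generation (e : V) :
    {x | ∃ n, e ∈ generation G h x n}.Finite := by
  refine ((Set.finite_Iic (h e)).biUnion fun n _ ↦
    finite_setOf_mem_generation (G := G) (h := h) e n).subset ?_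
  rintro x ⟨n, hn⟩
  have hn_le : n ≤ h e := by
    have := height_of_mem_generation hn
    lia
  exact Set.mem_biUnion hn_le hn

namespace IsForestHeight

theorem card_parents_of_mem_generation_succ (hh : IsForestHeight G h) {x v : V} {n : ℕ}
    (hv : v ∈ generation G h x (n + 1)) : #(parents G h v) = 1 := by
  obtain ⟨u, -, huv⟩ := mem_generation_succ.1 hv
  rw [hh.parents_eq_singleton huv, card_singleton]

theorem mem_generation_of_adj (hh : IsForestHeight G h) {x u v : V} {n : ℕ}
    (hv : v ∈ generation G h x (n + 1)) (huv : G.Adj v u) :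
    u ∈ generation G h x n ∨ u ∈ generation G h x (n + 2) := by
  rcases hh.eq_add_one_or_eq_add_one huv with hu | hu
  · obtain ⟨w, hw, hwv⟩ := mem_generation_succ.1 hv
    have : u ∈ parents G h v := mem_parents.2 ⟨huv, hu⟩
    rw [hh.parents_eq_singleton hwv, mem_singleton] at this
    exact .inl (this ▸ hw)
  · exact .inr (mem_generation_succ.2 ⟨v, hv, mem_children.2 ⟨huv, hu⟩⟩)

theorem exists_card_children_eq_of_mem_generation [Infinite V] (hh : IsForestHeight G h) {d : ℕ}
    (hd : 1 ≤ d) (hfin : {v | G.degree v ≠ d + 1}.Finite) :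
    ∃ x, ∀ n, ∀ v ∈ generation G h x n, #(children G h v) = d := by
  obtain ⟨z, hz⟩ := (hfin.biUnion fun e _ ↦
    finite_setOf_exists_mem_generation (G := G) (h := h) e).exists_notMem
  have hdegree : ∀ n, ∀ v ∈ generation G h z n, G.degree v = d + 1 := fun n v hv ↦ by
    by_contra hne
    exact hz (Set.mem_biUnion hne ⟨n, hv⟩)
  -- `z` itself may be a root, with `d + 1` children, but a child of `z` is not.
  obtain ⟨x, hx⟩ : (children G h z).Nonempty := by
    have hz_degree := hdegree 0 z (mem_singleton_self z)
    rw [hh.degree_eq] at hz_degree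
    have := hh.card_parents_le_one z
    exact card_pos.1 (by lia)
  refine ⟨x, fun n v hv ↦ ?_⟩
  have hvz := generation_subset_generation_succ hx n hv
  have hv_degree := hdegree _ v hvz
  rw [hh.degree_eq, hh.card_parents_of_mem_generation_succ hvz] at hv_degree
  lia

end IsForestHeight

end Generation

section LowerBound

variable {V : Type*} [DecidableEq V] {G : SimpleGraph V} [G.LocallyFinite] {h : V → ℕ}
  {x : V} {d : ℕ} {p : ℝ}

theorem IsForestHeight.card_generation (hh : IsForestHeight G h)
    (hx : ∀ n, ∀ v ∈ generation G h x n, #(children G h v) = d) (n : ℕ) :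
    #(generation G h x n) = d ^ n := by
  induction n with
  | zero => rfl
  | succ n ih =>
    rw [generation, card_biUnion (hh.pairwiseDisjoint_children _), sum_congr rfl (hx n),
      sum_const, ih, smul_eq_mul, pow_succ]

theorem IsForestHeight.sum_generation_inv_pow (hh : IsForestHeight G h) (hd : 0 < d)
    (hx : ∀ n, ∀ v ∈ generation G h x n, #(children G h v) = d) (n : ℕ) :
    ∑ v ∈ generation G h x n, (d⁻¹ : ℝ) ^ h v = (d⁻¹ : ℝ) ^ h x := by
  have hd0 : (d : ℝ) ≠ 0 := by positivity
  rw [sum_congr rfl fun v hv ↦ by rw [height_of_mem_generation hv], sum_const,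
    hh.card_generation hx, nsmul_eq_mul, Nat.cast_pow, pow_add, mul_left_comm, ← mul_pow,
    mul_inv_cancel₀ hd0, one_pow, mul_one]

theorem IsForestHeight.sum_biUnion_generation_inv_pow (hh : IsForestHeight G h) (hd : 0 < d)
    (hx : ∀ n, ∀ v ∈ generation G h x n, #(children G h v) = d) (s : Finset ℕ) :
    ∑ v ∈ s.biUnion (generation G h x), (d⁻¹ : ℝ) ^ h v = #s * (d⁻¹ : ℝ) ^ h x := by
  rw [sum_biUnion fun m _ n _ ↦ disjoint_generation x,
    sum_congr rfl fun n _ ↦ hh.sum_generation_inv_pow hd hx n, sum_const, nsmul_eq_mul]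

variable (G h) in
/-- The radial function `v ↦ t ^ h v` cut off outside the generations `0, …, n - 1` of
descendants of `x`. -/
noncomputable def truncatedRadial (x : V) (t : ℝ) (n : ℕ) (v : V) : ℂ :=
  if v ∈ (range n).biUnion (generation G h x) then ((t ^ h v : ℝ) : ℂ) else 0

theorem truncatedRadial_of_mem {t : ℝ} {m n : ℕ} (hmn : m < n) {v : V}
    (hv : v ∈ generation G h x m) : truncatedRadial G h x t n v = ((t ^ h v : ℝ) : ℂ) :=
  if_pos (mem_biUnion.2 ⟨m, mem_range.2 hmn, hv⟩)

theorem norm_truncatedRadial_rpow (hd : 0 < d) (hp : 0 < p) (n : ℕ) (v : V) :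
    ‖truncatedRadial G h x (radialRatio d p) n v‖ ^ p =
      if v ∈ (range n).biUnion (generation G h x) then (d⁻¹ : ℝ) ^ h v else 0 := by
  have ht0 : 0 < radialRatio d p := radialRatio_pos (Nat.cast_pos.2 hd)
  unfold truncatedRadial
  split_ifs
  · rw [Complex.norm_real, Real.norm_of_nonneg (by positivity), ← Real.rpow_pow_comm ht0.le,
      radialRatio_rpow d.cast_nonneg hp.ne']
  · rw [norm_zero, Real.zero_rpow hp.ne']

theorem IsForestHeight.hasSum_norm_truncatedRadial_rpow (hh : IsForestHeight G h) (hd : 0 < d)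
    (hx : ∀ n, ∀ v ∈ generation G h x n, #(children G h v) = d) (hp : 0 < p) (n : ℕ) :
    HasSum (fun v ↦ ‖truncatedRadial G h x (radialRatio d p) n v‖ ^ p)
      (n * (d⁻¹ : ℝ) ^ h x) := by
  simp only [norm_truncatedRadial_rpow hd hp]
  rw [← card_range n, ← hh.sum_biUnion_generation_inv_pow hd hx, card_range,
    ← sum_congr rfl fun v hv ↦ if_pos hv]
  exact hasSum_sum_of_ne_finset_zero fun v hv ↦ if_neg hv

theorem IsForestHeight.shiftOp_truncatedRadial (hh : IsForestHeight G h) (hd : 0 < d)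
    (hx : ∀ n, ∀ v ∈ generation G h x n, #(children G h v) = d) {m n : ℕ} (hmn : m + 2 < n)
    {v : V} (hv : v ∈ generation G h x (m + 1)) :
    shiftOp G (truncatedRadial G h x (radialRatio d p) n) v =
      shiftNorm d p * truncatedRadial G h x (radialRatio d p) n v := by
  have hd0 : (0 : ℝ) < d := Nat.cast_pos.2 hd
  have hneighbor : ∀ u ∈ G.neighborFinset v, truncatedRadial G h x (radialRatio d p) n u =
      ((radialRatio d p ^ h u : ℝ) : ℂ) := fun u hu ↦ by
    rcases hh.mem_generation_of_adj hv ((G.mem_neighborFinset v u).1 hu) with hu | hu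
    · exact truncatedRadial_of_mem (by lia) hu
    · exact truncatedRadial_of_mem hmn hu
  rw [shiftOp_eq_sum, sum_congr rfl hneighbor, ← Complex.ofReal_sum,
    hh.sum_neighborFinset_pow (radialRatio_pos hd0).ne', hx _ v hv,
    hh.card_parents_of_mem_generation_succ hv, Nat.cast_one, one_mul,
    inv_add_mul_radialRatio hd0, truncatedRadial_of_mem (by lia) hv, Complex.ofReal_mul]

theorem IsForestHeight.sum_norm_shiftOp_truncatedRadial (hh : IsForestHeight G h) (hd : 0 < d)
    (hx : ∀ n, ∀ v ∈ generation G h x n, #(children G h v) = d) (hp : 0 < p) (M : ℕ) :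
    ∑ v ∈ (Ico 1 (M + 1)).biUnion (generation G h x),
        ‖shiftOp G (truncatedRadial G h x (radialRatio d p) (M + 2)) v‖ ^ p =
      shiftNorm d p ^ p * (M * (d⁻¹ : ℝ) ^ h x) := by
  have hN : 0 < shiftNorm d p := shiftNorm_pos (Nat.cast_pos.2 hd)
  have hterm : ∀ v ∈ (Ico 1 (M + 1)).biUnion (generation G h x),
      ‖shiftOp G (truncatedRadial G h x (radialRatio d p) (M + 2)) v‖ ^ p =
        shiftNorm d p ^ p * (d⁻¹ : ℝ) ^ h v := fun v hv ↦ by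
    obtain ⟨n, hn, hvn⟩ := mem_biUnion.1 hv
    rw [mem_Ico] at hn
    obtain ⟨m, rfl⟩ := Nat.exists_eq_add_of_le' hn.1
    rw [hh.shiftOp_truncatedRadial hd hx (by lia) hvn, norm_mul, Complex.norm_real,
      Real.norm_of_nonneg hN.le, Real.mul_rpow hN.le (norm_nonneg _),
      norm_truncatedRadial_rpow hd hp,
      if_pos (mem_biUnion.2 ⟨m + 1, mem_range.2 (by lia), hvn⟩)]
  rw [sum_congr rfl hterm, ← mul_sum, hh.sum_biUnion_generation_inv_pow hd hx, Nat.card_Ico,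
    Nat.add_sub_cancel]

theorem IsShiftBound.shiftNorm_rpow_mul_le {C : ℝ} (hC : IsShiftBound G p C)
    (hh : IsForestHeight G h) (hd : 0 < d)
    (hx : ∀ n, ∀ v ∈ generation G h x n, #(children G h v) = d) (hp : 0 < p) (M : ℕ) :
    shiftNorm d p ^ p * M ≤ C ^ p * (M + 2) := by
  set f := truncatedRadial G h x (radialRatio d p) (M + 2)
  have hf := hh.hasSum_norm_truncatedRadial_rpow hd hx hp (M + 2)
  obtain ⟨hSf, hle⟩ := hC.2 f hf.summable
  rw [lpnorm_le_mul_lpnorm_iff hp hC.1, hf.tsum_eq] at hle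
  have hmass : 0 < (d⁻¹ : ℝ) ^ h x := by positivity
  refine le_of_mul_le_mul_right ?_ hmass
  calc shiftNorm d p ^ p * M * (d⁻¹ : ℝ) ^ h x
      = ∑ v ∈ (Ico 1 (M + 1)).biUnion (generation G h x), ‖shiftOp G f v‖ ^ p := by
        rw [hh.sum_norm_shiftOp_truncatedRadial hd hx hp, mul_assoc]
    _ ≤ ∑' v, ‖shiftOp G f v‖ ^ p := hSf.sum_le_tsum _ fun _ _ ↦ by positivity
    _ ≤ C ^ p * (M + 2) * (d⁻¹ : ℝ) ^ h x := by
        rw [mul_assoc]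
        exact_mod_cast hle

theorem IsShiftBound.shiftNorm_le {C : ℝ} (hC : IsShiftBound G p C) (hh : IsForestHeight G h)
    (hd : 0 < d) (hx : ∀ n, ∀ v ∈ generation G h x n, #(children G h v) = d) (hp : 0 < p) :
    shiftNorm d p ≤ C := by
  have hratio (M : ℕ) : shiftNorm d p ^ p * (M / (M + 2)) ≤ C ^ p := by
    rw [← mul_div_assoc, div_le_iff₀ (by positivity)]
    exact hC.shiftNorm_rpow_mul_le hh hd hx hp M
  have hlim : Tendsto (fun M : ℕ ↦ shiftNorm d p ^ p * (M / (M + 2) : ℝ)) atTop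
      (𝓝 (shiftNorm d p ^ p)) := by
    simpa only [mul_one] using (tendsto_natCast_div_add_atTop (2 : ℝ)).const_mul _
  exact (Real.rpow_le_rpow_iff (shiftNorm_pos (Nat.cast_pos.2 hd)).le hC.1 hp).1
    (le_of_tendsto' hlim hratio)

end LowerBound

theorem stmt6_general {V : Type*} [Infinite V] (G : SimpleGraph V) (hG : G.IsAcyclic)
    (hlf : ∀ v, (G.neighborSet v).Finite) (k : ℕ) (hk : 2 ≤ k) (hdeg : ∀ v, gdeg G v ≤ k)
    (hcof : {v | gdeg G v ≠ k}.Finite) (p : ℝ) (hp : 1 ≤ p) :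
    IsLeast {C : ℝ | IsShiftBound G p C}
      (((k : ℝ) - 1) ^ (1 / p) + ((k : ℝ) - 1) ^ (1 - 1 / p)) := by
  classical
  have : G.LocallyFinite := fun v ↦ (hlf v).fintype
  obtain ⟨d, rfl⟩ := Nat.exists_eq_add_of_le' (one_le_two.trans hk)
  have hd : 1 ≤ d := by lia
  simp only [gdeg_eq_degree] at hdeg hcof
  rw [Nat.cast_add, Nat.cast_one, add_sub_cancel_right]
  refine ⟨isShiftBound_shiftNorm hG (mod_cast hd) (fun v ↦ mod_cast hdeg v) hp, fun C hC ↦ ?_⟩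
  obtain ⟨h, hh⟩ := exists_isForestHeight hG
  obtain ⟨x, hx⟩ := hh.exists_card_children_eq_of_mem_generation hd hcof
  exact IsShiftBound.shiftNorm_le hC hh hd hx (by linarith)

/-- Let `T` be an almost `k`-regular tree (`k ≥ 2`): `deg v ≤ k`
everywhere and `deg v = k` for all but finitely many `v`. Let `1 < p < ∞` and
`q = p/(p−1)`. Then the operator norm of the shift on `ℓ^p(T)` equals
`(k−1)^{1/p} + (k−1)^{1/q}` (expressed as: this number is the least constant `C ≥ 0`
such that `S` maps `ℓ^p(T)` into itself with `‖Sf‖_p ≤ C‖f‖_p`). -/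
theorem stmt6 (V : Type*) [Countable V] [Infinite V] (T : SimpleGraph V)
    (htree : T.IsTree) (hlf : ∀ v, (T.neighborSet v).Finite)
    (k : ℕ) (hk : 2 ≤ k) (hdeg : ∀ v, gdeg T v ≤ k)
    (hcof : {v | gdeg T v ≠ k}.Finite)
    (p q : ℝ) (hp : 1 < p) (hq : q = p / (p - 1)) :
    IsLeast {C : ℝ | 0 ≤ C ∧ ∀ f : V → ℂ, memlp f p →
        memlp (shiftOp T f) p ∧ lpnorm (shiftOp T f) p ≤ C * lpnorm f p}
      (((k : ℝ) - 1) ^ (1 / p) + ((k : ℝ) - 1) ^ (1 / q)) := by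
  have hconj : 1 / q = 1 - 1 / p := by rw [hq]; field_simp
  exact hconj ▸ stmt6_general T htree.isAcyclic hlf k hk hdeg hcof p hp.le
end

section
/- Let H be a finite connected graph with vertices v_0, v_1, …, v_n, and let G_H be the graph obtained from H by attaching an infinite tail at v_0: adjoin new vertices u_1, u_2, … with u_k ~ u_{k+1} for all k ≥ 1 and v_0 ~ u_1. For every 1 ≤ p < ∞, the shift operator S is a bounded operator on ℓ^p(G_H), and its spectrum equals the union of the interval [−2, 2] with the set of eigenvalues of S: σ(S) = [−2,2] ∪ {λ ∈ ℂ : there exists a nonzero f ∈ ℓ^p(G_H) with Sf = λf}. -/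
open scoped ENNReal

/-- Base relation for a finite graph `H` on `v_0, …, v_n` (`Sum.inl`) with an infinite
tail `u_1, u_2, …` (`Sum.inr k` is `u_{k+1}`) attached at `v_0`. -/
def tailedRel (n : ℕ) (H : SimpleGraph (Fin (n + 1))) :
    (Fin (n + 1) ⊕ ℕ) → (Fin (n + 1) ⊕ ℕ) → Prop
  | Sum.inl i, Sum.inl j => H.Adj i j
  | Sum.inl i, Sum.inr k => (i : ℕ) = 0 ∧ k = 0
  | Sum.inr k, Sum.inr l => l = k + 1
  | _, _ => False

/-- The graph `G_H`: `H` with an infinite tail attached at `v_0`. -/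
def tailed (n : ℕ) (H : SimpleGraph (Fin (n + 1))) : SimpleGraph (Fin (n + 1) ⊕ ℕ) :=
  SimpleGraph.fromRel (tailedRel n H)

open scoped lp

/-!
Off a finite-rank operator `F`, the shift is `L + R` with `L` and `R` the backward and forward
shifts along the tail; these are contractions and `L R = 1 - P` with `P` of finite rank. Write
`λ = z + z⁻¹` with `‖z‖ ≤ 1`.

If `‖z‖ < 1`, then `z (λ - S) = (1 - z L) (1 - z R) - (z F - z ^ 2 P)` is an invertible operator
minus a compact one, so by the Fredholm alternative `λ` is an eigenvalue or not in the spectrum.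

If `‖z‖ = 1`, that is, `λ ∈ [-2, 2]`, then `λ - S` telescopes on the sum of `z ^ k e_{k+1}` over
`k < N`: the image stays bounded while the sum has norm `N ^ (1 / p)`, so `λ - S` has no bounded
inverse.
-/

theorem exists_norm_le_one_add_inv_eq (l : ℂ) : ∃ z : ℂ, z ≠ 0 ∧ ‖z‖ ≤ 1 ∧ z + z⁻¹ = l := by
  obtain ⟨w, hw⟩ := Complex.cos_surjective (l / 2)
  wlog hw_im : 0 ≤ w.im generalizing w
  · exact this (-w) (by rw [Complex.cos_neg, hw]) (by rw [Complex.neg_im]; linarith)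
  refine ⟨Complex.exp (w * Complex.I), Complex.exp_ne_zero _, ?_, ?_⟩
  · simpa [Complex.norm_exp] using hw_im
  · rw [← Complex.exp_neg, ← neg_mul, ← Complex.two_cos, hw, mul_div_cancel₀ _ two_ne_zero]

theorem image_add_inv_sphere :
    (fun z : ℂ => z + z⁻¹) '' Metric.sphere 0 1 = Complex.ofReal '' Set.Icc (-2) 2 := by
  have exp_add_inv (θ : ℝ) : Complex.exp (θ * Complex.I) + (Complex.exp (θ * Complex.I))⁻¹ =
      ((2 * Real.cos θ : ℝ) : ℂ) := by
    rw [← Complex.exp_neg, ← neg_mul, ← Complex.two_cos]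
    push_cast
    rfl
  ext l
  simp only [Set.mem_image, mem_sphere_zero_iff_norm]
  constructor
  · rintro ⟨z, hz, rfl⟩
    obtain ⟨θ, rfl⟩ := (Complex.norm_eq_one_iff z).1 hz
    exact ⟨2 * Real.cos θ, ⟨by linarith [Real.neg_one_le_cos θ], by linarith [Real.cos_le_one θ]⟩,
      (exp_add_inv θ).symm⟩
  · rintro ⟨t, ht, rfl⟩
    obtain ⟨θ, hθ⟩ : t / 2 ∈ Set.range Real.cos := by
      rw [Real.range_cos]
      constructor <;> linarith [ht.1, ht.2]
    refine ⟨_, Complex.norm_exp_ofReal_mul_I θ, ?_⟩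
    rw [exp_add_inv, hθ, mul_div_cancel₀ _ two_ne_zero]

theorem smul_add_inv_sub_eq {𝕜 A : Type*} [Field 𝕜] [Ring A] [Algebra 𝕜 A] {L R F P : A}
    (hLR : L * R = 1 - P) {z : 𝕜} (hz : z ≠ 0) :
    z • (algebraMap 𝕜 A (z + z⁻¹) - (L + R + F)) =
      (1 - z • L) * (1 - z • R) - (z • F - z ^ 2 • P) := by
  have hmul : (1 - z • L) * (1 - z • R) = 1 - z • (L + R) + z ^ 2 • (1 - P) := by
    rw [← hLR, mul_sub, sub_mul, sub_mul]
    simp only [mul_one, one_mul, smul_mul_smul_comm, smul_add, ← pow_two z]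
    abel
  rw [hmul, Algebra.algebraMap_eq_smul_one]
  match_scalars <;> field_simp
  all_goals ring

theorem sub_map_sum_smul_of_chain {𝕜 X : Type*} [Field 𝕜] [AddCommGroup X] [Module 𝕜 X]
    {T : X →ₗ[𝕜] X} {e : ℕ → X} (he : ∀ k, T (e (k + 1)) = e k + e (k + 2)) {z : 𝕜} (hz : z ≠ 0)
    (N : ℕ) :
    (z + z⁻¹) • ∑ k ∈ Finset.range N, z ^ k • e (k + 1) -
        T (∑ k ∈ Finset.range N, z ^ k • e (k + 1)) =
      z ^ N • (e N - z⁻¹ • e (N + 1)) - (e 0 - z⁻¹ • e 1) := by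
  induction N with
  | zero => simp
  | succ N ih =>
    rw [Finset.sum_range_succ, map_add, smul_add, add_sub_add_comm, ih, map_smul, he]
    match_scalars <;> field_simp <;> ring

section Banach

variable {𝕜 X : Type*} [NontriviallyNormedField 𝕜] [NormedAddCommGroup X] [NormedSpace 𝕜 X]

theorem isUnit_sub_of_isCompactOperator [CompleteSpace X] {A K : X →L[𝕜] X} (hA : IsUnit A)
    (hK : IsCompactOperator K) (hinj : Function.Injective (A - K)) : IsUnit (A - K) := by
  obtain ⟨U, rfl⟩ := hA
  have hfactor : (U : X →L[𝕜] X) - K = U * (1 - (↑U⁻¹ : X →L[𝕜] X) * K) := by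
    rw [mul_sub, mul_one, Units.mul_inv_cancel_left]
  have hcompact : IsCompactOperator ((↑U⁻¹ : X →L[𝕜] X) * K) := hK.clm_comp (↑U⁻¹ : X →L[𝕜] X)
  rw [hfactor]
  refine U.isUnit.mul ?_
  rcases hcompact.hasEigenvalue_or_mem_resolventSet (one_ne_zero (α := 𝕜)) with h | h
  · obtain ⟨f, hf⟩ := h.exists_hasEigenvector
    refine absurd (hinj ?_) hf.2
    have hfix : (↑U⁻¹ : X →L[𝕜] X) (K f) = f := by simpa using hf.apply_eq_smul
    rw [hfactor, map_zero]
    simp [hfix]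
  · simpa [spectrum.mem_resolventSet_iff] using h

theorem hasEigenvalue_of_mem_spectrum_add_compact [CompleteSpace X] {L R F P : X →L[𝕜] X}
    (hL : ‖L‖ ≤ 1) (hR : ‖R‖ ≤ 1) (hLR : L * R = 1 - P) (hF : IsCompactOperator F)
    (hP : IsCompactOperator P) {z : 𝕜} (hz₀ : z ≠ 0) (hz : ‖z‖ < 1)
    (hmem : z + z⁻¹ ∈ spectrum 𝕜 (L + R + F)) :
    Module.End.HasEigenvalue ((L + R + F : X →L[𝕜] X) : Module.End 𝕜 X) (z + z⁻¹) := by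
  have isUnit_one_sub {B : X →L[𝕜] X} (hB : ‖B‖ ≤ 1) : IsUnit (1 - z • B) := by
    refine isUnit_one_sub_of_norm_lt_one ?_
    calc ‖z • B‖ = ‖z‖ * ‖B‖ := norm_smul z B
      _ ≤ ‖z‖ * 1 := by gcongr
      _ < 1 := by rwa [mul_one]
  have hcompact : IsCompactOperator (z • F - z ^ 2 • P) := (hF.smul z).sub (hP.smul (z ^ 2))
  by_contra hev
  rw [Module.End.hasEigenvalue_iff, not_not] at hev
  have hinj : Function.Injective
      ((1 - z • L) * (1 - z • R) - (z • F - z ^ 2 • P) : X →L[𝕜] X) := by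
    rw [← smul_add_inv_sub_eq hLR hz₀, injective_iff_map_eq_zero]
    intro f hf
    have hker : (z + z⁻¹) • f - (L + R + F) f = 0 := by
      simpa [Algebra.algebraMap_eq_smul_one, hz₀] using hf
    rw [← Submodule.mem_bot 𝕜, ← hev, Module.End.mem_eigenspace_iff]
    exact (sub_eq_zero.1 hker).symm
  have hunit := isUnit_sub_of_isCompactOperator
    ((isUnit_one_sub hL).mul (isUnit_one_sub hR)) hcompact hinj
  rw [← smul_add_inv_sub_eq hLR hz₀, ← Units.smul_mk0 hz₀, isUnit_smul_iff] at hunit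
  exact hmem hunit

theorem add_inv_mem_spectrum_of_chain {T : X →L[𝕜] X} {e : ℕ → X}
    (he : ∀ k, T (e (k + 1)) = e k + e (k + 2)) {C : ℝ} (hC : ∀ k, ‖e k‖ ≤ C) {z : 𝕜}
    (hz : ‖z‖ = 1)
    (hsum : ¬ BddAbove (Set.range fun N => ‖∑ k ∈ Finset.range N, z ^ k • e (k + 1)‖)) :
    z + z⁻¹ ∈ spectrum 𝕜 T := by
  have hz₀ : z ≠ 0 := norm_ne_zero_iff.1 (hz.trans_ne one_ne_zero)
  have hpair (k : ℕ) : ‖e k - z⁻¹ • e (k + 1)‖ ≤ C + C := by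
    refine norm_sub_le_of_le (hC k) ?_
    rw [norm_smul, norm_inv, hz, inv_one, one_mul]
    exact hC (k + 1)
  rw [spectrum.mem_iff]
  rintro ⟨U, hU⟩
  refine hsum ⟨‖(↑U⁻¹ : X →L[𝕜] X)‖ * (C + C + (C + C)), ?_⟩
  rintro _ ⟨N, rfl⟩
  set g := ∑ k ∈ Finset.range N, z ^ k • e (k + 1) with hg
  have hUg : (U : X →L[𝕜] X) g = z ^ N • (e N - z⁻¹ • e (N + 1)) - (e 0 - z⁻¹ • e 1) := by
    rw [hU, hg, ← sub_map_sum_smul_of_chain (T := (T : X →ₗ[𝕜] X)) he hz₀ N,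
      Algebra.algebraMap_eq_smul_one]
    rfl
  calc ‖g‖ = ‖(↑U⁻¹ : X →L[𝕜] X) ((U : X →L[𝕜] X) g)‖ := by
        rw [← mul_apply_eq_comp, Units.inv_mul, one_apply_eq_self]
    _ ≤ ‖(↑U⁻¹ : X →L[𝕜] X)‖ * ‖(U : X →L[𝕜] X) g‖ := ContinuousLinearMap.le_opNorm _ _
    _ ≤ ‖(↑U⁻¹ : X →L[𝕜] X)‖ * (C + C + (C + C)) := by
        gcongr
        rw [hUg]
        refine norm_sub_le_of_le ?_ (hpair 0)
        rw [norm_smul, norm_pow, hz, one_pow, one_mul]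
        exact hpair N

end Banach

section Lp

variable {α β E 𝕜 : Type*} [NormedAddCommGroup E] [NontriviallyNormedField 𝕜] {p : ℝ≥0∞}
  [Fact (1 ≤ p)]

theorem sum_option_elim_rpow_le (hp : p ≠ ⊤) (e : α ≃. β) (f : ℓ^p(β, E)) (s : Finset α) :
    ∑ x ∈ s, ‖(e x).elim 0 f‖ ^ p.toReal ≤ ‖f‖ ^ p.toReal := by
  classical
  have hp₀ : 0 < p.toReal := (ENNReal.toReal_pos_iff_ne_top p).2 hp
  have hdisj : (s : Set α).PairwiseDisjoint fun x => (e x).toFinset := by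
    intro x _ y _ hxy
    rw [Function.onFun, Finset.disjoint_left]
    intro b hbx hby
    exact hxy (e.inj (Option.mem_toFinset.1 hbx) (Option.mem_toFinset.1 hby))
  calc ∑ x ∈ s, ‖(e x).elim 0 f‖ ^ p.toReal
      = ∑ x ∈ s, ∑ y ∈ (e x).toFinset, ‖f y‖ ^ p.toReal := by
        refine Finset.sum_congr rfl fun x _ => ?_
        cases e x <;> simp [Real.zero_rpow hp₀.ne']
    _ = ∑ y ∈ s.biUnion fun x => (e x).toFinset, ‖f y‖ ^ p.toReal :=
        (Finset.sum_biUnion hdisj).symm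
    _ ≤ ‖f‖ ^ p.toReal := lp.sum_rpow_le_norm_rpow hp₀ f _

theorem norm_option_elim_le (f : ℓ^∞(β, E)) (o : Option β) : ‖o.elim 0 f‖ ≤ ‖f‖ := by
  cases o with
  | none => simp
  | some y => exact lp.norm_apply_le_norm ENNReal.top_ne_zero f y

theorem memℓp_option_elim (e : α ≃. β) (f : ℓ^p(β, E)) : Memℓp (fun x => (e x).elim 0 f) p := by
  rcases eq_or_ne p ⊤ with rfl | hp
  · refine memℓp_infty ⟨‖f‖, ?_⟩
    rintro _ ⟨x, rfl⟩
    exact norm_option_elim_le f (e x)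
  · exact memℓp_gen' (sum_option_elim_rpow_le hp e f)

variable (𝕜 p)

/-- Composition with a partial injection `e`, extended by zero off the domain of `e`; the one-sided
shifts along the tail are of this form. -/
noncomputable def lpPullback (e : α ≃. β) : ℓ^p(β, 𝕜) →L[𝕜] ℓ^p(α, 𝕜) :=
  LinearMap.mkContinuous
    { toFun f := ⟨fun x => (e x).elim 0 f, memℓp_option_elim e f⟩
      map_add' f g := by
        ext x
        simp only [lp.coeFn_add, Pi.add_apply]
        cases e x <;> simp
      map_smul' c f := by
        ext x
        simp only [lp.coeFn_smul, Pi.smul_apply, RingHom.id_apply]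
        cases e x <;> simp }
    1 fun f => by
      rw [one_mul]
      rcases eq_or_ne p ⊤ with rfl | hp
      · exact lp.norm_le_of_forall_le (norm_nonneg f) fun x => norm_option_elim_le f (e x)
      · exact lp.norm_le_of_forall_sum_le
          ((ENNReal.toReal_pos_iff_ne_top p).2 hp) (norm_nonneg f)
          (sum_option_elim_rpow_le hp e f)

variable {𝕜 p}

theorem norm_lpPullback_le_one (e : α ≃. β) : ‖lpPullback 𝕜 p e‖ ≤ 1 :=
  LinearMap.mkContinuous_norm_le _ zero_le_one _

variable (p)

/-- The finite-rank operator on `ℓ^p` given by the `s × s` block of the infinite matrix `A`. -/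
noncomputable def lpFiniteMatrix [DecidableEq α] (s : Finset α) (A : Matrix α α 𝕜) :
    ℓ^p(α, 𝕜) →L[𝕜] ℓ^p(α, 𝕜) :=
  ∑ x ∈ s, (lp.singleContinuousLinearMap 𝕜 (fun _ : α => 𝕜) p x).comp
    (∑ y ∈ s, A x y • lp.evalCLM 𝕜 (fun _ : α => 𝕜) p y)

theorem lpFiniteMatrix_apply [DecidableEq α] (s : Finset α) (A : Matrix α α 𝕜) (f : ℓ^p(α, 𝕜))
    (u : α) : lpFiniteMatrix p s A f u = if u ∈ s then ∑ y ∈ s, A u y * f y else 0 := by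
  have hrow (x : α) : (∑ y ∈ s, A x y • lp.evalCLM 𝕜 (fun _ : α => 𝕜) p y) f =
      ∑ y ∈ s, A x y * f y := by
    rw [sum_apply]
    rfl
  rw [lpFiniteMatrix, sum_apply, lp.coeFn_sum, Finset.sum_apply]
  simp only [ContinuousLinearMap.comp_apply, hrow, lp.singleContinuousLinearMap_apply,
    lp.coeFn_single, Finset.sum_pi_single]

theorem isCompactOperator_lpFiniteMatrix [LocallyCompactSpace 𝕜] [DecidableEq α] (s : Finset α)
    (A : Matrix α α 𝕜) : IsCompactOperator (lpFiniteMatrix p s A) :=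
  (compactOperator (RingHom.id 𝕜) ℓ^p(α, 𝕜) ℓ^p(α, 𝕜)).sum_mem fun x _ =>
    (isCompactOperator_of_locallyCompactSpace_dom
      (∑ y ∈ s, A x y • lp.evalCLM 𝕜 (fun _ : α => 𝕜) p y)).clm_comp
      (lp.singleContinuousLinearMap 𝕜 (fun _ : α => 𝕜) p x)

variable {p}

theorem norm_sum_smul_single_rpow [DecidableEq α] (hp : p ≠ ⊤) {x : ℕ → α}
    (hx : Function.Injective x) {z : 𝕜} (hz : ‖z‖ = 1) (N : ℕ) :
    ‖∑ k ∈ Finset.range N, z ^ k • (lp.single p (x k) 1 : ℓ^p(α, 𝕜))‖ ^ p.toReal = N := by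
  have hx_extend (k : ℕ) : Function.extend x (fun k => z ^ k) 0 (x k) = z ^ k :=
    hx.extend_apply _ _ k
  have h := lp.norm_sum_single (E := fun _ : α => 𝕜)
    ((ENNReal.toReal_pos_iff_ne_top p).2 hp)
    (Function.extend x (fun k => z ^ k) 0) ((Finset.range N).map ⟨x, hx⟩)
  simp only [Finset.sum_map, Function.Embedding.coeFn_mk, hx_extend, norm_pow, hz, one_pow,
    Real.one_rpow, Finset.sum_const, Finset.card_range, nsmul_eq_mul, mul_one] at h
  simpa only [← lp.single_smul, smul_eq_mul, mul_one] using h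

theorem not_bddAbove_norm_sum_smul_single [DecidableEq α] (hp : p ≠ ⊤) {x : ℕ → α}
    (hx : Function.Injective x) {z : 𝕜} (hz : ‖z‖ = 1) :
    ¬ BddAbove (Set.range fun N =>
      ‖∑ k ∈ Finset.range N, z ^ k • (lp.single p (x k) 1 : ℓ^p(α, 𝕜))‖) := by
  rintro ⟨C, hC⟩
  obtain ⟨N, hN⟩ := exists_nat_gt (C ^ p.toReal)
  refine hN.not_ge ?_
  rw [← norm_sum_smul_single_rpow hp hx hz N]
  exact Real.rpow_le_rpow (norm_nonneg _) (hC ⟨N, rfl⟩) ENNReal.toReal_nonneg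

theorem hasEigenvalue_iff_exists_memℓp {T : ℓ^p(α, 𝕜) →L[𝕜] ℓ^p(α, 𝕜)} {A : (α → 𝕜) → α → 𝕜}
    (hT : ∀ f x, T f x = A f x) {z : 𝕜} :
    Module.End.HasEigenvalue (T : Module.End 𝕜 ℓ^p(α, 𝕜)) z ↔
      ∃ f : α → 𝕜, f ≠ 0 ∧ Memℓp f p ∧ ∀ x, A f x = z * f x := by
  constructor
  · intro h
    obtain ⟨f, hf⟩ := h.exists_hasEigenvector
    refine ⟨f, fun hf₀ => hf.2 (lp.ext hf₀), lp.memℓp f, fun x => ?_⟩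
    rw [← hT]
    exact congrFun (congrArg Subtype.val hf.apply_eq_smul) x
  · rintro ⟨f, hf₀, hfp, hf⟩
    refine Module.End.hasEigenvalue_of_hasEigenvector (x := ⟨f, hfp⟩)
      ⟨Module.End.mem_eigenspace_iff.2 (lp.ext (funext fun x => ?_)), fun h => ?_⟩
    · exact (hT _ x).trans (hf x)
    · exact hf₀ (congrArg Subtype.val h)

end Lp

section Tail

variable (𝕜 V : Type*) [NontriviallyNormedField 𝕜] (p : ℝ≥0∞) [Fact (1 ≤ p)]

/-- The partial bijection `u_k ↦ u_{k+1}` of the tail, undefined on `V`. -/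
def tailShift : V ⊕ ℕ ≃. V ⊕ ℕ where
  toFun
    | Sum.inl _ => none
    | Sum.inr k => some (Sum.inr (k + 1))
  invFun
    | Sum.inr (k + 1) => some (Sum.inr k)
    | _ => none
  inv := by
    rintro (v | k) (w | _ | l) <;> simp [eq_comm]

/-- The adjacency operator of the tail alone: the sum of the backward and the forward shift. -/
noncomputable def lpTailOp : ℓ^p(V ⊕ ℕ, 𝕜) →L[𝕜] ℓ^p(V ⊕ ℕ, 𝕜) :=
  lpPullback 𝕜 p (tailShift V) + lpPullback 𝕜 p (tailShift V).symm

variable {𝕜 V p}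

theorem lpTailOp_apply_inl (f : ℓ^p(V ⊕ ℕ, 𝕜)) (v : V) : lpTailOp 𝕜 V p f (Sum.inl v) = 0 :=
  add_zero (0 : 𝕜)

theorem lpTailOp_apply_inr_zero (f : ℓ^p(V ⊕ ℕ, 𝕜)) :
    lpTailOp 𝕜 V p f (Sum.inr 0) = f (Sum.inr 1) :=
  add_zero (f (Sum.inr 1))

theorem lpTailOp_apply_inr_succ (f : ℓ^p(V ⊕ ℕ, 𝕜)) (k : ℕ) :
    lpTailOp 𝕜 V p f (Sum.inr (k + 1)) = f (Sum.inr k) + f (Sum.inr (k + 2)) :=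
  add_comm (f (Sum.inr (k + 2))) (f (Sum.inr k))

theorem lpPullback_tailShift_mul_symm [Fintype V] [DecidableEq V] :
    lpPullback 𝕜 p (tailShift V) * lpPullback 𝕜 p (tailShift V).symm =
      1 - lpFiniteMatrix p (Finset.univ.disjSum ∅) 1 := by
  ext f (v | k)
  · change 0 = f (Sum.inl v) - lpFiniteMatrix p _ 1 f (Sum.inl v)
    simp [lpFiniteMatrix_apply, Matrix.one_apply]
  · change f (Sum.inr k) = f (Sum.inr k) - lpFiniteMatrix p _ 1 f (Sum.inr k)
    simp [lpFiniteMatrix_apply]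

theorem lpTailOp_single_succ [DecidableEq V] (k : ℕ) :
    lpTailOp 𝕜 V p (lp.single p (Sum.inr (k + 1)) 1) =
      lp.single p (Sum.inr k) 1 + lp.single p (Sum.inr (k + 2)) 1 := by
  ext (v | _ | l)
  · rw [lpTailOp_apply_inl]
    simp
  · rw [lpTailOp_apply_inr_zero]
    simp [Pi.single_apply, eq_comm]
  · rw [lpTailOp_apply_inr_succ]
    simp [Pi.single_apply, add_comm]

theorem spectrum_lpTailOp_add_subset [Finite V] {F : ℓ^p(V ⊕ ℕ, ℂ) →L[ℂ] ℓ^p(V ⊕ ℕ, ℂ)}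
    (hF : IsCompactOperator F) :
    spectrum ℂ (lpTailOp ℂ V p + F) ⊆ Complex.ofReal '' Set.Icc (-2) 2 ∪
      {l | Module.End.HasEigenvalue ((lpTailOp ℂ V p + F :
        ℓ^p(V ⊕ ℕ, ℂ) →L[ℂ] ℓ^p(V ⊕ ℕ, ℂ)) : Module.End ℂ ℓ^p(V ⊕ ℕ, ℂ)) l} := by
  classical
  have := Fintype.ofFinite V
  intro l hl
  obtain ⟨z, hz₀, hz, rfl⟩ := exists_norm_le_one_add_inv_eq l
  rcases hz.lt_or_eq with hz | hz
  · exact Or.inr (hasEigenvalue_of_mem_spectrum_add_compact (norm_lpPullback_le_one _)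
      (norm_lpPullback_le_one _) lpPullback_tailShift_mul_symm hF
      (isCompactOperator_lpFiniteMatrix _ _ _) hz₀ hz hl)
  · rw [← image_add_inv_sphere]
    exact Or.inl ⟨z, mem_sphere_zero_iff_norm.2 hz, rfl⟩

theorem Icc_subset_spectrum_lpTailOp_add [DecidableEq V] (hp : p ≠ ⊤)
    {F : ℓ^p(V ⊕ ℕ, ℂ) →L[ℂ] ℓ^p(V ⊕ ℕ, ℂ)}
    (hF : ∀ k : ℕ, F (lp.single p (Sum.inr (k + 1)) 1) = 0) :
    Complex.ofReal '' Set.Icc (-2) 2 ⊆ spectrum ℂ (lpTailOp ℂ V p + F) := by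
  rw [← image_add_inv_sphere]
  rintro _ ⟨z, hz, rfl⟩
  rw [mem_sphere_zero_iff_norm] at hz
  refine add_inv_mem_spectrum_of_chain (e := fun k => lp.single p (Sum.inr k) 1) (C := 1)
    (fun k => ?_) (fun k => ?_) hz
    (not_bddAbove_norm_sum_smul_single hp (x := fun k => Sum.inr (k + 1)) ?_ hz)
  · rw [add_apply, lpTailOp_single_succ, hF, add_zero]
  · rw [lp.norm_single (zero_lt_one.trans_le Fact.out), norm_one]
  · exact Sum.inr_injective.comp (add_left_injective 1)

theorem spectrum_lpTailOp_add [Finite V] [DecidableEq V] (hp : p ≠ ⊤)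
    {F : ℓ^p(V ⊕ ℕ, ℂ) →L[ℂ] ℓ^p(V ⊕ ℕ, ℂ)} (hF : IsCompactOperator F)
    (hF₀ : ∀ k : ℕ, F (lp.single p (Sum.inr (k + 1)) 1) = 0) :
    spectrum ℂ (lpTailOp ℂ V p + F) = Complex.ofReal '' Set.Icc (-2) 2 ∪
      {l | Module.End.HasEigenvalue ((lpTailOp ℂ V p + F :
        ℓ^p(V ⊕ ℕ, ℂ) →L[ℂ] ℓ^p(V ⊕ ℕ, ℂ)) : Module.End ℂ ℓ^p(V ⊕ ℕ, ℂ)) l} := by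
  refine (spectrum_lpTailOp_add_subset hF).antisymm
    (Set.union_subset (Icc_subset_spectrum_lpTailOp_add hp hF₀) fun l hl => ?_)
  rw [ContinuousLinearMap.spectrum_eq]
  exact Module.End.HasUnifEigenvalue.mem_spectrum hl

end Tail

section Graph

variable (n : ℕ) (H : SimpleGraph (Fin (n + 1)))

theorem tailed_adj_inl_inr {i : Fin (n + 1)} {k : ℕ} :
    (tailed n H).Adj (Sum.inl i) (Sum.inr k) ↔ i = 0 ∧ k = 0 := by
  simp [tailed, tailedRel]

theorem tailed_adj_inr_inr {k l : ℕ} :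
    (tailed n H).Adj (Sum.inr k) (Sum.inr l) ↔ l = k + 1 ∨ k = l + 1 := by
  simp only [tailed, SimpleGraph.fromRel_adj, tailedRel, ne_eq, Sum.inr.injEq]
  omega

/-- The vertices `v_0, …, v_n, u_1`, which span every edge of `tailed n H` not seen by
`lpTailOp`. -/
def tailedCore (n : ℕ) : Finset (Fin (n + 1) ⊕ ℕ) :=
  Finset.univ.disjSum {0}

theorem neighborSet_tailed_inl [DecidableRel (tailed n H).Adj] (i : Fin (n + 1)) :
    (tailed n H).neighborSet (Sum.inl i) =
      ↑((tailedCore n).filter ((tailed n H).Adj (Sum.inl i))) := by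
  ext (j | k)
  · simp [tailedCore]
  · simp [tailedCore, tailed_adj_inl_inr]

theorem neighborSet_tailed_inr_zero :
    (tailed n H).neighborSet (Sum.inr 0) = {Sum.inl 0, Sum.inr 1} := by
  ext (j | k)
  · simp [(tailed n H).adj_comm (Sum.inr 0), tailed_adj_inl_inr]
  · simp [tailed_adj_inr_inr]

theorem neighborSet_tailed_inr_succ (k : ℕ) :
    (tailed n H).neighborSet (Sum.inr (k + 1)) = {Sum.inr k, Sum.inr (k + 2)} := by
  ext (j | l)
  · simp [(tailed n H).adj_comm (Sum.inr _), tailed_adj_inl_inr]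
  · simp [tailed_adj_inr_inr, or_comm, eq_comm]

variable (p : ℝ≥0∞) [Fact (1 ≤ p)]

open Classical in
/-- The finite-rank part of the shift on `tailed n H`: the edges of `H` and the edge `v_0 u_1`. -/
noncomputable def lpCoreAdj : ℓ^p(Fin (n + 1) ⊕ ℕ, ℂ) →L[ℂ] ℓ^p(Fin (n + 1) ⊕ ℕ, ℂ) :=
  lpFiniteMatrix p (tailedCore n) ((tailed n H).adjMatrix ℂ)

theorem lpTailOp_add_lpCoreAdj_apply (f : ℓ^p(Fin (n + 1) ⊕ ℕ, ℂ)) (x : Fin (n + 1) ⊕ ℕ) :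
    (lpTailOp ℂ (Fin (n + 1)) p + lpCoreAdj n H p) f x = shiftOp (tailed n H) f x := by
  classical
  rw [add_apply, lp.coeFn_add, Pi.add_apply, lpCoreAdj, lpFiniteMatrix_apply, shiftOp]
  rcases x with i | _ | k
  · rw [lpTailOp_apply_inl, neighborSet_tailed_inl, finsum_mem_coe_finset]
    simp [tailedCore, Finset.sum_filter]
  · rw [lpTailOp_apply_inr_zero, neighborSet_tailed_inr_zero, finsum_mem_pair Sum.inl_ne_inr]
    simp [tailedCore, (tailed n H).adj_comm (Sum.inr 0) (Sum.inl _), tailed_adj_inl_inr, add_comm]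
  · rw [lpTailOp_apply_inr_succ, neighborSet_tailed_inr_succ, finsum_mem_pair (by simp)]
    simp [tailedCore]

theorem isCompactOperator_lpCoreAdj : IsCompactOperator (lpCoreAdj n H p) :=
  isCompactOperator_lpFiniteMatrix _ _ _

theorem lpCoreAdj_single_succ (k : ℕ) :
    lpCoreAdj n H p (lp.single p (Sum.inr (k + 1)) 1) = 0 := by
  ext x
  simp [lpCoreAdj, lpFiniteMatrix_apply, tailedCore]

end Graph

theorem stmt19_general (n : ℕ) (H : SimpleGraph (Fin (n + 1))) (p : ℝ≥0∞) [Fact (1 ≤ p)]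
    (hp : p ≠ ⊤) :
    ∃ S : lp (fun _ : Fin (n + 1) ⊕ ℕ => ℂ) p →L[ℂ] lp (fun _ : Fin (n + 1) ⊕ ℕ => ℂ) p,
      (∀ (f : lp (fun _ : Fin (n + 1) ⊕ ℕ => ℂ) p) (x : Fin (n + 1) ⊕ ℕ),
        (S f) x = shiftOp (tailed n H) (fun y => f y) x) ∧
      spectrum ℂ S =
        ((fun t : ℝ => (t : ℂ)) '' Set.Icc (-2) 2) ∪
        {z : ℂ | ∃ f : (Fin (n + 1) ⊕ ℕ) → ℂ, f ≠ 0 ∧ Memℓp f p ∧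
          ∀ x, shiftOp (tailed n H) f x = z * f x} := by
  refine ⟨_, lpTailOp_add_lpCoreAdj_apply n H p, ?_⟩
  rw [spectrum_lpTailOp_add hp (isCompactOperator_lpCoreAdj n H p)
    (lpCoreAdj_single_succ n H p)]
  simp only [hasEigenvalue_iff_exists_memℓp (lpTailOp_add_lpCoreAdj_apply n H p)]

/-- Let `H` be a finite connected graph on `v_0, …, v_n` and let `G_H`
be `H` with an infinite tail attached at `v_0`. For `1 ≤ p < ∞`, the shift is a bounded
operator on `ℓ^p(G_H)` and its spectrum equals `[−2, 2]` together with the set of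
eigenvalues of the shift. -/
theorem stmt19 (n : ℕ) (H : SimpleGraph (Fin (n + 1))) (hH : H.Connected)
    (p : ℝ≥0∞) [Fact (1 ≤ p)] (hp : p ≠ ⊤) :
    ∃ S : lp (fun _ : Fin (n + 1) ⊕ ℕ => ℂ) p →L[ℂ] lp (fun _ : Fin (n + 1) ⊕ ℕ => ℂ) p,
      (∀ (f : lp (fun _ : Fin (n + 1) ⊕ ℕ => ℂ) p) (x : Fin (n + 1) ⊕ ℕ),
        (S f) x = shiftOp (tailed n H) (fun y => f y) x) ∧
      spectrum ℂ S =
        ((fun t : ℝ => (t : ℂ)) '' Set.Icc (-2) 2) ∪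
        {z : ℂ | ∃ f : (Fin (n + 1) ⊕ ℕ) → ℂ, f ≠ 0 ∧ Memℓp f p ∧
          ∀ x, shiftOp (tailed n H) f x = z * f x} := by
  exact stmt19_general n H p hp
end
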